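/- arXiv:1312.1113 — 2 statements merged into one kernel-verified Lean document; each statement's English description precedes it below -/
import Mathlib

section
/- Hardy's uncertainty principle on ℝ: if f : ℝ → ℂ is a nontrivial measurable function satisfying |f(x)| ≤ C e^{-a x²} and |f̂(y)| ≤ C e^{-b y²} for all x, y ∈ ℝ, with a, b > 0, then a·b ≤ 1/4. -/
open MeasureTheory Real Complex

/-!
Suppose `a * b > 1 / 4`. Gaussian decay of `f` makes its Fourier transform extend to an entire
function `F` on each complex line, and completing the square gives `‖F z‖ ≤ B * exp (q * z.im ^ 2)`
for every `q > 1 / (4 * a)`; take `q < b`. Then `G z = exp (b * z ^ 2) * F z` is bounded on the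
real axis, because `F` decays there like `exp (-b * x ^ 2)`, and on a double cone around the
imaginary axis, because `q < b`. Each of the four remaining sectors has opening less than `π / 2`
while `G` has order at most `2`, so by Phragmén–Lindelöf `G` is bounded everywhere. As `G` tends to
`0` along the imaginary axis, Liouville's theorem gives `G = 0`, and `f = 0` by injectivity of the
Fourier transform.
-/

open Filter Set Topology
open scoped FourierTransform RealInnerProductSpace

section PhragmenLindelof

variable {E : Type*} [NormedAddCommGroup E] [NormedSpace ℂ E]

/-- The open sector of the complex plane with vertex `0` between the rays of argument `α` and `β`.
The vertex is excluded explicitly, since `Complex.arg 0 = 0`. -/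
def openSector (α β : ℝ) : Set ℂ := {z | z ≠ 0 ∧ z.arg ∈ Ioo α β}

theorem arg_exp_eq_im {ζ : ℂ} (hζ : ζ.im ∈ Ioc (-π) π) : (Complex.exp ζ).arg = ζ.im := by
  rw [← Complex.log_im, Complex.log_exp hζ.1 hζ.2]

theorem norm_le_of_norm_le_on_openSector_boundary {f : ℂ → E} {α β A B c M : ℝ}
    (hα : -π < α) (hβ : β ≤ π) (hf : DiffContOnCl ℂ f (openSector α β))
    (hc₀ : 0 ≤ c) (hc : c < π / (β - α))
    (hgrowth : ∀ z ∈ openSector α β, ‖f z‖ ≤ A * Real.exp (B * ‖z‖ ^ c))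
    (hfα : ∀ z ≠ 0, z.arg = α → ‖f z‖ ≤ M) (hfβ : ∀ z ≠ 0, z.arg = β → ‖f z‖ ≤ M)
    {z : ℂ} (hz : z ≠ 0) (hzα : α ≤ z.arg) (hzβ : z.arg ≤ β) : ‖f z‖ ≤ M := by
  have hmaps : MapsTo Complex.exp (im ⁻¹' Ioo α β) (openSector α β) := fun ζ hζ =>
    ⟨Complex.exp_ne_zero ζ, by
      rwa [arg_exp_eq_im ⟨hα.trans hζ.1, hζ.2.le.trans hβ⟩]⟩
  have hgrowth_exp : (f ∘ Complex.exp) =O[comap (_root_.abs ∘ re) atTop ⊓ 𝓟 (im ⁻¹' Ioo α β)]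
      fun ζ : ℂ => Real.exp (|B| * Real.exp (c * |ζ.re|)) := by
    refine .of_bound |A| (mem_inf_of_right fun ζ hζ => ?_)
    calc ‖f (Complex.exp ζ)‖ ≤ A * Real.exp (B * ‖Complex.exp ζ‖ ^ c) := hgrowth _ (hmaps hζ)
      _ = A * Real.exp (B * Real.exp (c * ζ.re)) := by
        rw [Complex.norm_exp, ← Real.exp_mul, mul_comm ζ.re]
      _ ≤ |A| * Real.exp (|B| * Real.exp (c * |ζ.re|)) := by
        gcongr <;> exact le_abs_self _
      _ = |A| * ‖Real.exp (|B| * Real.exp (c * |ζ.re|))‖ := by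
        rw [Real.norm_of_nonneg (Real.exp_pos _).le]
  have hαβ : α < β := by
    by_contra! h
    exact (hc₀.trans_lt hc).not_ge (div_nonpos_of_nonneg_of_nonpos pi_pos.le (by linarith))
  have hbound := PhragmenLindelof.horizontal_strip (f := f ∘ Complex.exp) (z := Complex.log z)
    (hf.comp Complex.differentiable_exp.diffContOnCl hmaps) ⟨c, hc, |B|, hgrowth_exp⟩
    (fun ζ hζ => hfα _ (Complex.exp_ne_zero ζ) (by
      rw [arg_exp_eq_im (by constructor <;> linarith), hζ]))
    (fun ζ hζ => hfβ _ (Complex.exp_ne_zero ζ) (by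
      rw [arg_exp_eq_im (by constructor <;> linarith), hζ]))
    (by rwa [Complex.log_im]) (by rwa [Complex.log_im])
  rwa [Function.comp_apply, Complex.exp_log hz] at hbound

theorem abs_re_le_mul_abs_im_of_arctan_inv_le_abs_arg {k : ℝ} (hk : 0 < k) {z : ℂ}
    (hre : 0 ≤ z.re) (hz : Real.arctan k⁻¹ ≤ |z.arg|) : |z.re| ≤ k * |z.im| := by
  set θ := Real.arctan k⁻¹
  have hθ : 0 ≤ θ := Real.arctan_nonneg.2 (inv_nonneg.2 hk.le)
  have harg : |z.arg| ≤ π / 2 := Complex.abs_arg_le_pi_div_two_iff.2 hre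
  have hcosθ : Real.cos θ = k * Real.sin θ := by
    rw [← Real.tan_mul_cos (Real.cos_arctan_pos _).ne', Real.tan_arctan,
      mul_inv_cancel_left₀ hk.ne']
  calc |z.re| = ‖z‖ * Real.cos |z.arg| := by
        rw [Real.cos_abs, Complex.norm_mul_cos_arg, abs_of_nonneg hre]
    _ ≤ ‖z‖ * Real.cos θ := by
        gcongr
        exact Real.cos_le_cos_of_nonneg_of_le_pi hθ (by linarith [pi_pos]) hz
    _ = k * (‖z‖ * Real.sin θ) := by rw [hcosθ]; ring
    _ ≤ k * (‖z‖ * Real.sin |z.arg|) := by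
        gcongr
        exact Real.sin_le_sin_of_le_of_le_pi_div_two (by linarith) harg hz
    _ = k * (‖z‖ * |Real.sin z.arg|) := by
        rw [Real.abs_sin_eq_sin_abs_of_abs_le_pi (by linarith [pi_pos])]
    _ = k * |z.im| := by rw [← Complex.norm_mul_sin_arg z, abs_mul, abs_norm]

theorem norm_le_of_norm_le_on_real_of_norm_le_on_cone {G : ℂ → E} (hG : Differentiable ℂ G)
    {A B k M : ℝ} (hk : 0 < k) (hgrowth : ∀ z, ‖G z‖ ≤ A * Real.exp (B * ‖z‖ ^ 2))
    (hreal : ∀ x : ℝ, ‖G x‖ ≤ M) (hcone : ∀ z : ℂ, |z.re| ≤ k * |z.im| → ‖G z‖ ≤ M) (z : ℂ) :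
    ‖G z‖ ≤ M := by
  wlog hre : 0 ≤ z.re generalizing G z
  · simpa using this (G := fun w => G (-w)) (hG.comp differentiable_neg)
      (fun w => by simpa using hgrowth (-w)) (fun x => by simpa using hreal (-x))
      (fun w hw => hcone (-w) (by simpa using hw)) (-z) (by simpa using (not_le.1 hre).le)
  set θ := Real.arctan k⁻¹
  have hθ : 0 < θ := Real.arctan_pos.2 (inv_pos.2 hk)
  have hθ' : θ < π / 2 := Real.arctan_lt_pi_div_two _
  have hopening : 2 < π / θ := by rw [lt_div_iff₀ hθ]; linarith
  have hgrowth' (w : ℂ) : ‖G w‖ ≤ A * Real.exp (B * ‖w‖ ^ (2 : ℝ)) := by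
    simpa using hgrowth w
  have hpos_axis (w : ℂ) (_ : w ≠ 0) (hw : w.arg = 0) : ‖G w‖ ≤ M := by
    rw [← Complex.norm_mul_exp_arg_mul_I w, hw]
    simpa using hreal ‖w‖
  have hray (w : ℂ) (hw : |w.arg| = θ) : ‖G w‖ ≤ M :=
    hcone w (abs_re_le_mul_abs_im_of_arctan_inv_le_abs_arg hk
      (Complex.abs_arg_le_pi_div_two_iff.1 (hw.trans_le hθ'.le)) hw.ge)
  rcases le_total θ |z.arg| with harg | harg
  · exact hcone z (abs_re_le_mul_abs_im_of_arctan_inv_le_abs_arg hk hre harg)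
  rcases eq_or_ne z 0 with rfl | hz
  · simpa using hreal 0
  obtain ⟨hneg, hpos⟩ := abs_le.1 harg
  rcases le_total 0 z.arg with h | h
  · exact norm_le_of_norm_le_on_openSector_boundary (by linarith) (by linarith) hG.diffContOnCl
      zero_le_two (by rwa [sub_zero]) (fun w _ => hgrowth' w) hpos_axis
      (fun w _ hw => hray w (by rw [hw, abs_of_pos hθ])) hz h hpos
  · exact norm_le_of_norm_le_on_openSector_boundary (by linarith) pi_pos.le hG.diffContOnCl
      zero_le_two (by rwa [zero_sub, neg_neg]) (fun w _ => hgrowth' w)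
      (fun w _ hw => hray w (by rw [hw, abs_neg, abs_of_pos hθ])) hpos_axis hz hneg h

theorem eq_zero_of_norm_le_exp_sub {G : ℂ → E} (hG : Differentiable ℂ G) {M b d : ℝ}
    (hb : 0 < b) (hd : 0 < d) (hreal : ∀ x : ℝ, ‖G x‖ ≤ M)
    (hbound : ∀ z : ℂ, ‖G z‖ ≤ M * Real.exp (b * z.re ^ 2 - d * z.im ^ 2)) (z : ℂ) : G z = 0 := by
  have hM : 0 ≤ M := (norm_nonneg _).trans (hreal 0)
  have hgrowth (w : ℂ) : ‖G w‖ ≤ M * Real.exp (b * ‖w‖ ^ 2) := by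
    refine (hbound w).trans ?_
    rw [Complex.sq_norm, Complex.normSq_apply]
    gcongr
    nlinarith [mul_nonneg hb.le (sq_nonneg w.im), mul_nonneg hd.le (sq_nonneg w.im)]
  have hcone (w : ℂ) (hw : |w.re| ≤ √(d / b) * |w.im|) : ‖G w‖ ≤ M := by
    have hsq : w.re ^ 2 ≤ d / b * w.im ^ 2 := by
      calc w.re ^ 2 = |w.re| ^ 2 := (sq_abs _).symm
        _ ≤ (√(d / b) * |w.im|) ^ 2 := by gcongr
        _ = d / b * w.im ^ 2 := by rw [mul_pow, Real.sq_sqrt (by positivity), sq_abs]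
    refine (hbound w).trans (mul_le_of_le_one_right hM (Real.exp_le_one_iff.2 (sub_nonpos.2 ?_)))
    calc b * w.re ^ 2 ≤ b * (d / b * w.im ^ 2) := by gcongr
      _ = d * w.im ^ 2 := by field_simp
  have hbounded : Bornology.IsBounded (range G) :=
    isBounded_iff_forall_norm_le.2 ⟨M, forall_mem_range.2 <|
      norm_le_of_norm_le_on_real_of_norm_le_on_cone hG (by positivity) hgrowth hreal hcone⟩
  have hlim : Tendsto (fun t : ℝ => M * Real.exp (-(d * t ^ 2))) atTop (𝓝 0) := by
    simpa using (Real.tendsto_exp_neg_atTop_nhds_zero.comp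
      ((tendsto_pow_atTop two_ne_zero).const_mul_atTop hd)).const_mul M
  refine norm_le_zero_iff.1 (ge_of_tendsto' hlim fun t => ?_)
  rw [hG.apply_eq_apply_of_bounded hbounded z (t * I)]
  simpa using hbound (t * I)

theorem norm_cexp_mul_sq (b : ℝ) (z : ℂ) :
    ‖Complex.exp (b * z ^ 2)‖ = Real.exp (b * (z.re ^ 2 - z.im ^ 2)) := by
  rw [Complex.norm_exp, Complex.re_ofReal_mul, sq, Complex.mul_re, sq, sq]

theorem eq_zero_of_norm_le_exp_neg_sq_of_norm_le_exp_im_sq {F : ℂ → E} (hF : Differentiable ℂ F)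
    {A B b q : ℝ} (hb : 0 < b) (hqb : q < b)
    (hreal : ∀ x : ℝ, ‖F x‖ ≤ A * Real.exp (-b * x ^ 2))
    (hbound : ∀ z : ℂ, ‖F z‖ ≤ B * Real.exp (q * z.im ^ 2)) (z : ℂ) : F z = 0 := by
  let G : ℂ → E := fun w => Complex.exp (b * w ^ 2) • F w
  have hG : Differentiable ℂ G := by fun_prop
  have hGnorm (w : ℂ) : ‖G w‖ = Real.exp (b * (w.re ^ 2 - w.im ^ 2)) * ‖F w‖ := by
    rw [norm_smul, norm_cexp_mul_sq]
  have hGreal (x : ℝ) : ‖G x‖ ≤ max A B := by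
    rw [hGnorm, Complex.ofReal_re, Complex.ofReal_im]
    calc Real.exp (b * (x ^ 2 - 0 ^ 2)) * ‖F x‖
        ≤ Real.exp (b * (x ^ 2 - 0 ^ 2)) * (A * Real.exp (-b * x ^ 2)) := by
          gcongr
          exact hreal x
      _ = A := by
          rw [mul_left_comm, ← Real.exp_add,
            show b * (x ^ 2 - 0 ^ 2) + -b * x ^ 2 = 0 by ring, Real.exp_zero, mul_one]
      _ ≤ max A B := le_max_left A B
  have hGbound (w : ℂ) :
      ‖G w‖ ≤ max A B * Real.exp (b * w.re ^ 2 - (b - q) * w.im ^ 2) := by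
    rw [hGnorm]
    calc Real.exp (b * (w.re ^ 2 - w.im ^ 2)) * ‖F w‖
        ≤ Real.exp (b * (w.re ^ 2 - w.im ^ 2)) * (B * Real.exp (q * w.im ^ 2)) := by
          gcongr
          exact hbound w
      _ = B * Real.exp (b * w.re ^ 2 - (b - q) * w.im ^ 2) := by
          rw [mul_left_comm, ← Real.exp_add]
          ring_nf
      _ ≤ max A B * Real.exp (b * w.re ^ 2 - (b - q) * w.im ^ 2) := by
          gcongr
          exact le_max_right A B
  exact (smul_eq_zero.1 (eq_zero_of_norm_le_exp_sub hG hb (sub_pos.2 hqb) hGreal hGbound z)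
    ).resolve_left (Complex.exp_ne_zero _)

end PhragmenLindelof

section ParametricIntegral

variable {X E : Type*} [MeasurableSpace X] {μ : Measure X} [NormedAddCommGroup E]
  [NormedSpace ℂ E]

theorem differentiable_integral_cexp_mul_smul {h : X → ℂ} {f : X → E}
    (hh : AEStronglyMeasurable h μ)
    (hf : ∀ c : ℝ, Integrable (fun x => Real.exp (c * ‖h x‖) • f x) μ) :
    Differentiable ℂ fun z => ∫ x, Complex.exp (h x * z) • f x ∂μ := by
  intro z₀
  have hfm : AEStronglyMeasurable f μ := by simpa using (hf 0).aestronglyMeasurable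
  have hkernel (z : ℂ) : AEStronglyMeasurable (fun x => Complex.exp (h x * z)) μ :=
    Complex.continuous_exp.comp_aestronglyMeasurable (hh.mul_const z)
  have hnorm (x : X) (z : ℂ) : ‖Complex.exp (h x * z)‖ ≤ Real.exp (‖z‖ * ‖h x‖) := by
    rw [mul_comm ‖z‖, ← norm_mul]
    exact Complex.norm_exp_le_exp_norm _
  refine (hasDerivAt_integral_of_dominated_loc_of_deriv_le
    (F' := fun z x => (Complex.exp (h x * z) * h x) • f x)
    (bound := fun x => ‖Real.exp ((‖z₀‖ + 2) * ‖h x‖) • f x‖)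
    (Metric.ball_mem_nhds z₀ one_pos) (.of_forall fun z => (hkernel z).smul hfm)
    ((hf ‖z₀‖).mono ((hkernel z₀).smul hfm) (.of_forall fun x => ?_))
    (((hkernel z₀).mul hh).smul hfm) (.of_forall fun x z hz => ?_) (hf (‖z₀‖ + 2)).norm
    (.of_forall fun x z _ => ?_)).2.differentiableAt
  · rw [Pi.smul_apply', norm_smul, norm_smul, Real.norm_of_nonneg (Real.exp_pos _).le]
    gcongr
    exact hnorm x z₀
  · have hz' : ‖z‖ ≤ ‖z₀‖ + 1 := by
      linarith [norm_le_norm_add_norm_sub' z z₀, mem_ball_iff_norm.1 hz]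
    rw [norm_smul, norm_smul, Real.norm_of_nonneg (Real.exp_pos _).le, norm_mul]
    gcongr
    calc ‖Complex.exp (h x * z)‖ * ‖h x‖
        ≤ Real.exp ((‖z₀‖ + 1) * ‖h x‖) * Real.exp ‖h x‖ := by
          gcongr
          · exact (hnorm x z).trans (by gcongr)
          · linarith [Real.add_one_le_exp ‖h x‖]
      _ = Real.exp ((‖z₀‖ + 2) * ‖h x‖) := by
          rw [← Real.exp_add]
          ring_nf
  · exact (((hasDerivAt_id z).const_mul (h x)).cexp.smul_const (f x)).congr_deriv (by simp)

end ParametricIntegral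

theorem mul_le_mul_sq_add_sq_div {p : ℝ} (hp : 0 < p) (c t : ℝ) :
    c * t ≤ p * t ^ 2 + c ^ 2 / (4 * p) := by
  have hsq : p * t ^ 2 + c ^ 2 / (4 * p) - c * t = (2 * p * t - c) ^ 2 / (4 * p) := by
    field_simp
    ring
  exact sub_nonneg.1 (hsq ▸ by positivity)

theorem exp_mul_norm_mul_norm_le {V E : Type*} [SeminormedAddCommGroup V] [SeminormedAddCommGroup E]
    {f : V → E} {a C p : ℝ} {x : V} (hx : ‖f x‖ ≤ C * Real.exp (-a * ‖x‖ ^ 2)) (hp : 0 < p)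
    (c : ℝ) :
    Real.exp (c * ‖x‖) * ‖f x‖ ≤
      C * Real.exp (c ^ 2 / (4 * p)) * Real.exp (-(a - p) * ‖x‖ ^ 2) := by
  calc Real.exp (c * ‖x‖) * ‖f x‖
      ≤ Real.exp (p * ‖x‖ ^ 2 + c ^ 2 / (4 * p)) * ‖f x‖ := by
        gcongr
        exact mul_le_mul_sq_add_sq_div hp c ‖x‖
    _ ≤ Real.exp (p * ‖x‖ ^ 2 + c ^ 2 / (4 * p)) * (C * Real.exp (-a * ‖x‖ ^ 2)) := by gcongr
    _ = C * Real.exp (c ^ 2 / (4 * p)) * Real.exp (-(a - p) * ‖x‖ ^ 2) := by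
        rw [mul_left_comm, mul_assoc, ← Real.exp_add, ← Real.exp_add]
        ring_nf

theorem norm_cexp_neg_I_inner_mul_le {V : Type*} [SeminormedAddCommGroup V]
    [InnerProductSpace ℝ V] (x v : V) (z : ℂ) :
    ‖Complex.exp (-I * ⟪x, v⟫ * z)‖ ≤ Real.exp (‖v‖ * |z.im| * ‖x‖) := by
  rw [Complex.norm_exp, Real.exp_le_exp]
  calc (-I * ⟪x, v⟫ * z).re = ⟪x, v⟫ * z.im := by simp
    _ ≤ |⟪x, v⟫| * |z.im| := (le_abs_self _).trans (abs_mul _ _).le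
    _ ≤ ‖x‖ * ‖v‖ * |z.im| := by
        gcongr
        exact abs_real_inner_le_norm x v
    _ = ‖v‖ * |z.im| * ‖x‖ := by ring

section InnerProductSpace

variable {V E : Type*} [NormedAddCommGroup V] [InnerProductSpace ℝ V] [FiniteDimensional ℝ V]
  [MeasurableSpace V] [BorelSpace V] [NormedAddCommGroup E] [NormedSpace ℂ E]

theorem ae_eq_zero_of_fourier_eq_zero [CompleteSpace E] {f : V → E} (hf : Integrable f)
    (hzero : ∀ w, 𝓕 f w = 0) : f =ᵐ[volume] 0 := by
  refine ae_eq_zero_of_integral_contDiff_smul_eq_zero hf.locallyIntegrable fun g hg hgc => ?_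
  let φ : SchwartzMap V ℂ :=
    (hgc.comp_left (g := ((↑) : ℝ → ℂ)) Complex.ofReal_zero).toSchwartzMap
      (Complex.ofRealCLM.contDiff.comp hg)
  let ψ : SchwartzMap V ℂ := 𝓕⁻ φ
  have hψ : 𝓕 (ψ : V → ℂ) = φ := by
    rw [← SchwartzMap.fourier_coe, FourierTransform.fourier_fourierInv_eq]
  calc ∫ x, g x • f x = ∫ x, 𝓕 (ψ : V → ℂ) x • f x := by
        rw [hψ]
        exact integral_congr_ae (.of_forall fun x => (Complex.coe_smul (g x) (f x)).symm)
    _ = ∫ x, ψ x • 𝓕 f x := by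
        have hflip := VectorFourier.integral_fourierIntegral_smul_eq_flip (L := innerₗ V)
          Real.continuous_fourierChar continuous_inner (ψ.integrable (μ := volume)) hf
        rwa [flip_innerₗ] at hflip
    _ = 0 := by simp [hzero]

theorem integrable_exp_neg_mul_sq_norm {c : ℝ} (hc : 0 < c) :
    Integrable fun x : V => Real.exp (-c * ‖x‖ ^ 2) := by
  simpa [Complex.norm_exp, ← Complex.ofReal_pow] using
    (GaussianFourier.integrable_cexp_neg_mul_sq_norm_add (V := V) (b := c) (by simpa) 0 0).norm

/-- The Fourier–Laplace transform of `f` along the complex line spanned by `v`, that is the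
Fourier transform `y ↦ ∫ x, exp (-i⟪x, y⟫) f(x)` evaluated at the complex vector `z v`. It is not
normalized by a power of `2π`. -/
noncomputable def fourierLaplace (f : V → E) (v : V) (z : ℂ) : E :=
  ∫ x, Complex.exp (-I * ⟪x, v⟫ * z) • f x

theorem fourierLaplace_ofReal (f : V → E) (v : V) (t : ℝ) :
    fourierLaplace f v t = ∫ x, Complex.exp (-I * ⟪x, t • v⟫) • f x := by
  simp only [fourierLaplace, real_inner_smul_right]
  congr! 4
  push_cast
  ring

theorem fourier_smul_eq_fourierLaplace (f : V → E) (v : V) (t : ℝ) :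
    𝓕 f (t • v) = fourierLaplace f v (2 * π * t) := by
  simp only [Real.fourier_eq', fourierLaplace, real_inner_smul_right]
  congr! 4
  push_cast
  ring

section GaussianDecay

variable {f : V → E} {a C : ℝ}

theorem integrable_exp_mul_norm_smul_of_gaussian_decay (hf : AEStronglyMeasurable f) (ha : 0 < a)
    (hdecay : ∀ᵐ x, ‖f x‖ ≤ C * Real.exp (-a * ‖x‖ ^ 2)) (c : ℝ) :
    Integrable fun x => Real.exp (c * ‖x‖) • f x := by
  refine ((integrable_exp_neg_mul_sq_norm (sub_pos.2 (half_lt_self ha))).const_mul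
    (C * Real.exp (c ^ 2 / (4 * (a / 2))))).mono' ?_ ?_
  · exact (by fun_prop : Continuous fun x : V => Real.exp (c * ‖x‖)).aestronglyMeasurable.smul hf
  · filter_upwards [hdecay] with x hx
    rw [norm_smul, Real.norm_of_nonneg (Real.exp_pos _).le]
    exact exp_mul_norm_mul_norm_le hx (half_pos ha) c

theorem differentiable_fourierLaplace (hf : AEStronglyMeasurable f) (ha : 0 < a)
    (hdecay : ∀ᵐ x, ‖f x‖ ≤ C * Real.exp (-a * ‖x‖ ^ 2)) (v : V) :
    Differentiable ℂ (fourierLaplace f v) := by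
  refine differentiable_integral_cexp_mul_smul (by fun_prop) fun c => ?_
  have hkernel : Continuous fun x : V => Real.exp (c * ‖-I * (⟪x, v⟫ : ℂ)‖) := by fun_prop
  refine (integrable_exp_mul_norm_smul_of_gaussian_decay hf ha hdecay (|c| * ‖v‖)).mono
    (hkernel.aestronglyMeasurable.smul hf) (.of_forall fun x => ?_)
  rw [norm_smul, norm_smul, Real.norm_of_nonneg (Real.exp_pos _).le,
    Real.norm_of_nonneg (Real.exp_pos _).le]
  refine mul_le_mul_of_nonneg_right (Real.exp_le_exp.2 ?_) (norm_nonneg _)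
  calc c * ‖-I * (⟪x, v⟫ : ℂ)‖ ≤ |c| * |⟪x, v⟫| := by
        simpa using mul_le_mul_of_nonneg_right (le_abs_self c) (abs_nonneg ⟪x, v⟫)
    _ ≤ |c| * (‖x‖ * ‖v‖) := by
        gcongr
        exact abs_real_inner_le_norm x v
    _ = |c| * ‖v‖ * ‖x‖ := by ring

theorem norm_fourierLaplace_le (hdecay : ∀ᵐ x, ‖f x‖ ≤ C * Real.exp (-a * ‖x‖ ^ 2)) {p : ℝ}
    (hp : 0 < p) (hpa : p < a) (v : V) (z : ℂ) :
    ‖fourierLaplace f v z‖ ≤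
      (C * ∫ x : V, Real.exp (-(a - p) * ‖x‖ ^ 2)) *
        Real.exp (‖v‖ ^ 2 / (4 * p) * z.im ^ 2) := by
  calc ‖fourierLaplace f v z‖
      ≤ ∫ x : V, C * Real.exp ((‖v‖ * |z.im|) ^ 2 / (4 * p)) *
          Real.exp (-(a - p) * ‖x‖ ^ 2) := by
        refine norm_integral_le_of_norm_le
          ((integrable_exp_neg_mul_sq_norm (sub_pos.2 hpa)).const_mul _) ?_
        filter_upwards [hdecay] with x hx
        rw [norm_smul]
        exact (mul_le_mul_of_nonneg_right (norm_cexp_neg_I_inner_mul_le x v z)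
          (norm_nonneg _)).trans (exp_mul_norm_mul_norm_le hx hp _)
    _ = _ := by
        rw [integral_const_mul, mul_pow, sq_abs, mul_div_right_comm]
        ring

theorem fourierLaplace_eq_zero_of_gaussian_decay {b D : ℝ} (hf : AEStronglyMeasurable f)
    (ha : 0 < a) (hab : 1 / 4 < a * b) (hdecay : ∀ᵐ x, ‖f x‖ ≤ C * Real.exp (-a * ‖x‖ ^ 2))
    (hhat : ∀ y : V, ‖∫ x, Complex.exp (-I * ⟪x, y⟫) • f x‖ ≤ D * Real.exp (-b * ‖y‖ ^ 2))
    {v : V} (hv : v ≠ 0) (z : ℂ) : fourierLaplace f v z = 0 := by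
  have hb : 0 < b := pos_of_mul_pos_right (by linarith) ha.le
  obtain ⟨p, hbp, hpa⟩ : ∃ p, 1 / (4 * b) < p ∧ p < a :=
    exists_between (by rw [div_lt_iff₀ (by positivity)]; linarith)
  have hp : 0 < p := lt_trans (by positivity) hbp
  have hq : ‖v‖ ^ 2 / (4 * p) < b * ‖v‖ ^ 2 := by
    rw [div_lt_iff₀ (by positivity)] at hbp ⊢
    nlinarith [sq_pos_of_pos (norm_pos_iff.2 hv)]
  refine eq_zero_of_norm_le_exp_neg_sq_of_norm_le_exp_im_sq (A := D) (b := b * ‖v‖ ^ 2)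
    (differentiable_fourierLaplace hf ha hdecay v) (by positivity) hq (fun t => ?_)
    (norm_fourierLaplace_le hdecay hp hpa v) z
  calc ‖fourierLaplace f v t‖ ≤ D * Real.exp (-b * ‖t • v‖ ^ 2) :=
        fourierLaplace_ofReal f v t ▸ hhat (t • v)
    _ = D * Real.exp (-(b * ‖v‖ ^ 2) * t ^ 2) := by
        rw [norm_smul, mul_pow, Real.norm_eq_abs, sq_abs]
        ring_nf

end GaussianDecay

theorem hardy_uncertainty_general [Nontrivial V] [CompleteSpace E] {f : V → E} {a b C D : ℝ}
    (hf : AEStronglyMeasurable f) (hne : ¬ f =ᵐ[volume] 0) (ha : 0 < a)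
    (hdecay : ∀ᵐ x, ‖f x‖ ≤ C * Real.exp (-a * ‖x‖ ^ 2))
    (hhat : ∀ y : V, ‖∫ x, Complex.exp (-I * ⟪x, y⟫) • f x‖ ≤ D * Real.exp (-b * ‖y‖ ^ 2)) :
    a * b ≤ 1 / 4 := by
  by_contra! hab
  have hint : Integrable f := by
    simpa using integrable_exp_mul_norm_smul_of_gaussian_decay hf ha hdecay 0
  refine hne (ae_eq_zero_of_fourier_eq_zero hint fun w => ?_)
  obtain ⟨v, hv, t, rfl⟩ : ∃ v : V, v ≠ 0 ∧ ∃ t : ℝ, w = t • v := by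
    rcases eq_or_ne w 0 with rfl | hw
    · obtain ⟨v, hv⟩ := exists_ne (0 : V)
      exact ⟨v, hv, 0, (zero_smul ℝ v).symm⟩
    · exact ⟨w, hw, 1, (one_smul ℝ w).symm⟩
  rw [fourier_smul_eq_fourierLaplace]
  exact fourierLaplace_eq_zero_of_gaussian_decay hf ha hab hdecay hhat hv _

end InnerProductSpace

/-- Hardy's uncertainty principle on ℝ: if a nontrivial measurable `f` satisfies
`|f(x)| ≤ C e^{-ax²}` and `|f̂(y)| ≤ C e^{-by²}` with `a, b > 0`, then `ab ≤ 1/4`. -/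
theorem hardy_uncertainty (f : ℝ → ℂ) (hf : Measurable f)
    (hne : ¬ f =ᵐ[volume] 0)
    (a b C : ℝ) (ha : 0 < a) (hb : 0 < b) (hC : 0 < C)
    (hdecay : ∀ x : ℝ, ‖f x‖ ≤ C * Real.exp (-a * x ^ 2))
    (hhat : ∀ y : ℝ,
      ‖(((2 * π) ^ (-(1 : ℝ) / 2) : ℝ) : ℂ) *
        ∫ x : ℝ, f x * Complex.exp (-Complex.I * x * y)‖ ≤ C * Real.exp (-b * y ^ 2)) :
    a * b ≤ 1 / 4 := by
  have hκ : 0 < (2 * π) ^ (-(1 : ℝ) / 2) := by positivity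
  refine hardy_uncertainty_general (D := C / (2 * π) ^ (-(1 : ℝ) / 2)) hf.aestronglyMeasurable hne
    ha (.of_forall fun x => by simpa using hdecay x) fun y => ?_
  have hy := hhat y
  rw [norm_mul, Complex.norm_of_nonneg hκ.le, mul_comm, ← le_div_iff₀ hκ] at hy
  simpa [mul_comm, mul_left_comm, mul_div_right_comm] using hy
end

section
/- If g is a Schwartz function on ℝⁿ and f = g * p_a (a > 0), then f extends to an entire function on ℂⁿ and for every nonnegative integer m there is C_m with |f(x+iy)|² ≤ C_m (1+|x|²+|y|²)^{-m} (8πa)^{-n/2} e^{|y|²/(2a)} for all x, y ∈ ℝⁿ. -/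
open MeasureTheory Real Complex

/-!
The modulus of `p_a(z - u)` is at most `(4πa)^{-n/2} e^{|Im z|²/(4a)}`, uniformly in `u ∈ ℝⁿ`.
Hence `f(z) = ∫ p_a(z - u) g(u) du` converges for every `z ∈ ℂⁿ` as soon as `g` is integrable, is
holomorphic in `z`, and satisfies the estimate with `m = 0`. Since
`z_j p_a(z - u) = (u_j + 2a ∂/∂u_j) p_a(z - u)`, integration by parts shows that `z_j f(z)` is the
extension obtained from `(u_j - 2a ∂_j) g`, which is again a Schwartz function. Thus multiplying
`|f|²` by `1 + |z|²` does not change the form of the estimate, and the decay in `z` follows by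
induction on `m`.
-/

open scoped LineDeriv SchwartzMap

section HolomorphicFamily

variable {α V E : Type*} [MeasurableSpace α] {μ : Measure α} [NormedAddCommGroup V]
  [NormedSpace ℂ V] [NormedAddCommGroup E] [NormedSpace ℂ E]

theorem norm_fderiv_le_of_forall_mem_ball_norm_le {f : V → E} {c : V} {r M : ℝ} (hr : 0 < r)
    (hf : DifferentiableOn ℂ f (Metric.ball c r)) (hM : ∀ z ∈ Metric.ball c r, ‖f z‖ ≤ M) :
    ‖fderiv ℂ f c‖ ≤ 2 * M / r := by
  refine Complex.norm_fderiv_le_div_of_mapsTo_ball hf (fun z hz => ?_) hr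
  rw [mem_closedBall_iff_norm, two_mul]
  exact norm_sub_le_of_le (hM z hz) (hM c (Metric.mem_ball_self hr))

theorem hasFDerivAt_integral_of_dominated_of_differentiableOn {f : V → α → E} {bound : α → ℝ}
    {c : V} {r : ℝ} (hr : 0 < r)
    (hf_meas : ∀ z ∈ Metric.ball c r, AEStronglyMeasurable (f z) μ)
    (hf'_meas : AEStronglyMeasurable (fun u => fderiv ℂ (f · u) c) μ)
    (hf_diff : ∀ᵐ u ∂μ, DifferentiableOn ℂ (f · u) (Metric.ball c r))
    (hf_bound : ∀ᵐ u ∂μ, ∀ z ∈ Metric.ball c r, ‖f z u‖ ≤ bound u)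
    (h_bound : Integrable bound μ) :
    HasFDerivAt (fun z => ∫ u, f z u ∂μ) (∫ u, fderiv ℂ (f · u) c ∂μ) c := by
  have hc : c ∈ Metric.ball c r := Metric.mem_ball_self hr
  have hsub : ∀ z ∈ Metric.ball c (r / 2), Metric.ball z (r / 2) ⊆ Metric.ball c r := fun z hz =>
    Metric.ball_subset_ball' (by linarith [Metric.mem_ball.1 hz])
  refine hasFDerivAt_integral_of_dominated_of_fderiv_le (𝕜 := ℂ)
    (F' := fun z u => fderiv ℂ (f · u) z) (bound := fun u => 2 * bound u / (r / 2))
    (Metric.ball_mem_nhds c (half_pos hr))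
    (Filter.eventually_of_mem (Metric.ball_mem_nhds c hr) hf_meas)
    (h_bound.mono' (hf_meas c hc) (hf_bound.mono fun u hu => hu c hc)) hf'_meas
    ?_ ((h_bound.const_mul 2).div_const _) ?_
  · filter_upwards [hf_diff, hf_bound] with u hdiff hbound z hz
    exact norm_fderiv_le_of_forall_mem_ball_norm_le (half_pos hr) (hdiff.mono (hsub z hz))
      fun w hw => hbound w (hsub z hz hw)
  · filter_upwards [hf_diff] with u hdiff z hz
    have hz' : z ∈ Metric.ball c r := hsub z hz (Metric.mem_ball_self (half_pos hr))
    exact (hdiff.differentiableAt (Metric.isOpen_ball.mem_nhds hz')).hasFDerivAt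

end HolomorphicFamily

section HeatKernel

variable {ι : Type*} [Fintype ι] {a : ℝ}

/-- The heat kernel `p_a(z) = (4πa)^{-n/2} e^{-(z₁² + ⋯ + zₙ²)/(4a)}`, continued from `ℝⁿ` to
`ℂⁿ`. -/
noncomputable def heatKernel (a : ℝ) (z : ι → ℂ) : ℂ :=
  ((4 * π * a) ^ (-(Fintype.card ι : ℝ) / 2) : ℝ) * Complex.exp (-(∑ j, z j ^ 2) / (4 * (a : ℂ)))

theorem contDiff_heatKernel {m : WithTop ℕ∞} : ContDiff ℂ m (heatKernel a : (ι → ℂ) → ℂ) := by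
  unfold heatKernel
  fun_prop

theorem continuous_heatKernel : Continuous (heatKernel a : (ι → ℂ) → ℂ) :=
  (contDiff_heatKernel (m := 0)).continuous

theorem norm_heatKernel_le (ha : 0 < a) (z : ι → ℂ) :
    ‖heatKernel a z‖ ≤
      (4 * π * a) ^ (-(Fintype.card ι : ℝ) / 2) * Real.exp ((∑ j, (z j).im ^ 2) / (4 * a)) := by
  have hre : (-(∑ j, z j ^ 2) / (4 * (a : ℂ))).re =
      ((∑ j, (z j).im ^ 2) - ∑ j, (z j).re ^ 2) / (4 * a) := by
    rw [← Complex.ofReal_ofNat, ← Complex.ofReal_mul, Complex.div_ofReal_re, Complex.neg_re,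
      Complex.re_sum, ← Finset.sum_sub_distrib, ← Finset.sum_neg_distrib]
    congr! 2 with j
    simp only [sq, Complex.mul_re]
    ring
  rw [heatKernel, norm_mul, Complex.norm_exp, hre, Complex.norm_of_nonneg (by positivity)]
  gcongr
  exact sub_le_self _ (by positivity)

theorem norm_heatKernel_sub_ofReal_le (ha : 0 < a) (z : ι → ℂ) (u : ι → ℝ) :
    ‖heatKernel a fun j => z j - u j‖ ≤
      (4 * π * a) ^ (-(Fintype.card ι : ℝ) / 2) * Real.exp ((∑ j, (z j).im ^ 2) / (4 * a)) := by
  simpa using norm_heatKernel_le ha fun j => z j - u j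

theorem hasLineDerivAt_heatKernel_sub_ofReal [DecidableEq ι] (z : ι → ℂ) (u : ι → ℝ) (j : ι) :
    HasLineDerivAt ℝ (fun u : ι → ℝ => heatKernel a fun i => z i - u i)
      ((z j - u j) / (2 * a) * heatKernel a fun i => z i - u i) u (Pi.single j 1) := by
  have hcoord (i : ι) : HasDerivAt
      (fun t : ℝ => (z i - ((u + t • Pi.single j (1 : ℝ) : ι → ℝ) i : ℂ)) ^ 2)
      (if i = j then -2 * (z i - u i) else 0) 0 := by
    have h := ((((hasDerivAt_id (0 : ℝ)).mul_const ((Pi.single j 1 : ι → ℝ) i)).const_add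
      (u i)).ofReal_comp.const_sub (z i)).pow 2
    refine h.congr_deriv ?_
    split_ifs with hij <;> simp [hij]
  have hsum := HasDerivAt.fun_sum fun i (_ : i ∈ Finset.univ) => hcoord i
  refine ((hsum.neg.div_const (4 * (a : ℂ))).cexp.const_mul _).congr_deriv ?_
  simp only [heatKernel, Finset.sum_ite_eq', Finset.mem_univ, if_true, zero_smul, add_zero,
    Pi.neg_apply]
  ring

end HeatKernel

section HeatExtension

variable {ι E : Type*} [Fintype ι] [NormedAddCommGroup E] [NormedSpace ℂ E] {a : ℝ}
  {f : (ι → ℝ) → E}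

/-- The extension `z ↦ ∫ p_a(z - u) f(u) du` of the convolution `f * p_a` from `ℝⁿ` to `ℂⁿ`. -/
noncomputable def heatExtension (a : ℝ) (f : (ι → ℝ) → E) (z : ι → ℂ) : E :=
  ∫ u, heatKernel a (fun j => z j - u j) • f u

theorem integrable_heatKernel_smul (ha : 0 < a) (hf : Integrable f) (z : ι → ℂ) :
    Integrable fun u => heatKernel a (fun j => z j - u j) • f u :=
  hf.bdd_smul _ (continuous_heatKernel.comp (by fun_prop)).aestronglyMeasurable
    (.of_forall (norm_heatKernel_sub_ofReal_le ha z))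

theorem norm_heatExtension_le (ha : 0 < a) (hf : Integrable f) (z : ι → ℂ) :
    ‖heatExtension a f z‖ ≤ (4 * π * a) ^ (-(Fintype.card ι : ℝ) / 2) *
      Real.exp ((∑ j, (z j).im ^ 2) / (4 * a)) * ∫ u, ‖f u‖ := by
  rw [← integral_const_mul]
  refine norm_integral_le_of_norm_le (hf.norm.const_mul _) (.of_forall fun u => ?_)
  rw [norm_smul]
  gcongr
  exact norm_heatKernel_sub_ofReal_le ha z u

theorem differentiable_heatExtension (ha : 0 < a) (hf : Integrable f) :
    Differentiable ℂ (heatExtension a f) := by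
  intro z₀
  set b : (ι → ℂ) → ℝ := fun z =>
    (4 * π * a) ^ (-(Fintype.card ι : ℝ) / 2) * Real.exp ((∑ j, (z j).im ^ 2) / (4 * a))
  have hb_cont : Continuous b := by fun_prop
  obtain ⟨r, hr, hbr⟩ := Metric.eventually_nhds_iff_ball.1
    (hb_cont.continuousAt.eventually (gt_mem_nhds (lt_add_one (b z₀))))
  have hdiff (u : ι → ℝ) : Differentiable ℂ fun z : ι → ℂ => heatKernel a fun j => z j - u j :=
    (contDiff_heatKernel.differentiable one_ne_zero).comp (by fun_prop)
  have hfderiv (u : ι → ℝ) :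
      fderiv ℂ (fun z : ι → ℂ => heatKernel a (fun j => z j - u j) • f u) z₀ =
        (fderiv ℂ (heatKernel a) fun j => z₀ j - u j).smulRight (f u) := by
    rw [fderiv_smul_const (hdiff u z₀)]
    congr 1
    exact fderiv_comp_sub (f := heatKernel a) (fun j => (u j : ℂ))
  refine (hasFDerivAt_integral_of_dominated_of_differentiableOn hr
    (fun z _ => (integrable_heatKernel_smul ha hf z).aestronglyMeasurable) ?_
    (.of_forall fun u => ((hdiff u).smul_const _).differentiableOn) (.of_forall fun u z hz => ?_)
    (hf.norm.const_mul (b z₀ + 1))).differentiableAt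
  · simp_rw [hfderiv]
    have hcont : Continuous fun u : ι → ℝ => fderiv ℂ (heatKernel a) fun j => z₀ j - u j :=
      ((contDiff_heatKernel (m := 1)).continuous_fderiv one_ne_zero).comp (by fun_prop)
    exact (ContinuousLinearMap.smulRightL ℂ (ι → ℂ) E).aestronglyMeasurable_comp₂
      hcont.aestronglyMeasurable hf.aestronglyMeasurable
  · rw [norm_smul]
    gcongr
    exact (norm_heatKernel_sub_ofReal_le ha z u).trans (hbr z hz).le

theorem norm_heatExtension_sq_le (ha : 0 < a) (hf : Integrable f) (z : ι → ℂ) :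
    ‖heatExtension a f z‖ ^ 2 ≤
      (2 * π * a) ^ (-(Fintype.card ι : ℝ) / 2) * (∫ u, ‖f u‖) ^ 2 *
        ((8 * π * a) ^ (-(Fintype.card ι : ℝ) / 2) *
          Real.exp ((∑ j, (z j).im ^ 2) / (2 * a))) := by
  set s : ℝ := -(Fintype.card ι : ℝ) / 2
  have hconst : ((4 * π * a) ^ s) ^ 2 = (2 * π * a) ^ s * (8 * π * a) ^ s := by
    rw [sq, ← Real.mul_rpow (by positivity) (by positivity),
      ← Real.mul_rpow (by positivity) (by positivity)]
    ring_nf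
  have hexp : Real.exp ((∑ j, (z j).im ^ 2) / (4 * a)) ^ 2 =
      Real.exp ((∑ j, (z j).im ^ 2) / (2 * a)) := by
    rw [← Real.exp_nat_mul]
    congr 1
    push_cast
    ring
  calc ‖heatExtension a f z‖ ^ 2
      ≤ ((4 * π * a) ^ s * Real.exp ((∑ j, (z j).im ^ 2) / (4 * a)) * ∫ u, ‖f u‖) ^ 2 := by
        gcongr
        exact norm_heatExtension_le ha hf z
    _ = _ := by
        rw [mul_pow, mul_pow, hconst, hexp]
        ring

theorem heatExtension_sub {g : (ι → ℝ) → E} (ha : 0 < a) (hf : Integrable f) (hg : Integrable g)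
    (z : ι → ℂ) :
    heatExtension a (fun u => f u - g u) z = heatExtension a f z - heatExtension a g z := by
  simp only [heatExtension, smul_sub]
  exact integral_sub (integrable_heatKernel_smul ha hf z) (integrable_heatKernel_smul ha hg z)

theorem heatExtension_const_smul (c : ℂ) (z : ι → ℂ) :
    heatExtension a (fun u => c • f u) z = c • heatExtension a f z := by
  simp only [heatExtension, smul_comm _ c]
  exact integral_smul c _

theorem heatExtension_lineDeriv [DecidableEq ι] {f' : (ι → ℝ) → E} {j : ι} (ha : 0 < a)
    (hf : Integrable f) (hf' : Integrable f') (hjf : Integrable fun u => (u j : ℂ) • f u)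
    (hderiv : ∀ u, HasLineDerivAt ℝ f (f' u) u (Pi.single j 1)) (z : ι → ℂ) :
    heatExtension a f' z = (2 * a : ℂ)⁻¹ •
      (heatExtension a (fun u => (u j : ℂ) • f u) z - z j • heatExtension a f z) := by
  have hkernel : ∀ u : ι → ℝ,
      ((z j - u j) / (2 * a) * heatKernel a fun i => z i - u i) • f u =
        (2 * a : ℂ)⁻¹ • (z j • heatKernel a (fun i => z i - u i) • f u -
          heatKernel a (fun i => z i - u i) • (u j : ℂ) • f u) := fun u => by
    rw [smul_smul, smul_smul, ← sub_smul, smul_smul]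
    congr 1
    ring
  have hz := (integrable_heatKernel_smul ha hf z).fun_smul (z j)
  have hu := integrable_heatKernel_smul ha hjf z
  have hparts : ∫ u, heatKernel a (fun i => z i - u i) • f' u =
      -∫ u, ((z j - u j) / (2 * a) * heatKernel a fun i => z i - u i) • f u := by
    refine integral_bilinear_hasLineDerivAt_right_eq_neg_left_of_integrable (μ := volume)
      (B := ContinuousLinearMap.lsmul ℝ ℂ) (v := Pi.single j 1) ?_
      (integrable_heatKernel_smul ha hf' z) (integrable_heatKernel_smul ha hf z)
      (fun u _ => hasLineDerivAt_heatKernel_sub_ofReal z u j) (fun u _ => hderiv u)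
    exact ((hz.sub hu).smul _).congr (.of_forall fun u => (hkernel u).symm)
  simp only [hkernel] at hparts
  rw [integral_smul, integral_sub hz hu, integral_smul, ← smul_neg, neg_sub] at hparts
  exact hparts

end HeatExtension

section Schwartz

variable {ι E : Type*} [Fintype ι] [NormedAddCommGroup E]

/-- The operator `u_j - 2a ∂_j` on Schwartz functions, which `heatExtension a` turns into
multiplication by the coordinate `z_j`. -/
noncomputable def coordOperator [DecidableEq ι] [NormedSpace ℝ E] (a : ℝ) (j : ι) :
    𝓢(ι → ℝ, E) →L[ℝ] 𝓢(ι → ℝ, E) :=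
  SchwartzMap.smulLeftCLM E (fun u : ι → ℝ => u j) -
    (2 * a) • LineDeriv.lineDerivOpCLM ℝ 𝓢(ι → ℝ, E) (Pi.single j 1 : ι → ℝ)

theorem smulLeftCLM_coord_apply [NormedSpace ℝ E] (g : 𝓢(ι → ℝ, E)) (j : ι) (u : ι → ℝ) :
    SchwartzMap.smulLeftCLM E (fun u : ι → ℝ => u j) g u = u j • g u :=
  SchwartzMap.smulLeftCLM_apply_apply
    (ContinuousLinearMap.proj (R := ℝ) (φ := fun _ : ι => ℝ) j).hasTemperateGrowth g u

variable [NormedSpace ℂ E] {a : ℝ}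

theorem heatExtension_coordOperator [DecidableEq ι] (ha : 0 < a) (g : 𝓢(ι → ℝ, E)) (j : ι)
    (z : ι → ℂ) :
    heatExtension a (coordOperator a j g) z = z j • heatExtension a g z := by
  have ha' : (2 * a : ℂ) ≠ 0 := by exact_mod_cast (mul_pos two_pos ha).ne'
  have hcoord : Integrable fun u : ι → ℝ => (u j : ℂ) • g u :=
    (SchwartzMap.smulLeftCLM E (fun u : ι → ℝ => u j) g).integrable.congr
      (.of_forall (smulLeftCLM_coord_apply g j))
  have hline : Integrable (∂_{(Pi.single j 1 : ι → ℝ)} g : 𝓢(ι → ℝ, E)) :=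
    SchwartzMap.integrable _
  have happly : ⇑(coordOperator a j g) = fun u =>
      (u j : ℂ) • g u - (2 * a : ℂ) • (∂_{(Pi.single j 1 : ι → ℝ)} g : 𝓢(ι → ℝ, E)) u := by
    ext u
    simp [coordOperator, smulLeftCLM_coord_apply, ← Complex.coe_smul]
  rw [happly, heatExtension_sub ha hcoord (hline.fun_smul _), heatExtension_const_smul,
    heatExtension_lineDeriv ha g.integrable hline hcoord
      (fun u => by
        simpa only [SchwartzMap.lineDerivOp_apply] using
          g.differentiableAt.lineDifferentiableAt.hasLineDerivAt) z,
    smul_inv_smul₀ ha', sub_sub_cancel]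

theorem exists_pow_mul_norm_heatExtension_sq_le (ha : 0 < a) (m : ℕ) (g : 𝓢(ι → ℝ, E)) :
    ∃ C : ℝ, ∀ z : ι → ℂ, (1 + ∑ j, ‖z j‖ ^ 2) ^ m * ‖heatExtension a g z‖ ^ 2 ≤
      C * ((8 * π * a) ^ (-(Fintype.card ι : ℝ) / 2) *
        Real.exp ((∑ j, (z j).im ^ 2) / (2 * a))) := by
  classical
  induction m generalizing g with
  | zero => exact ⟨_, fun z => by simpa using norm_heatExtension_sq_le ha g.integrable z⟩
  | succ m ih =>
    obtain ⟨C₀, hC₀⟩ := ih g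
    choose C hC using fun j => ih (coordOperator a j g)
    refine ⟨C₀ + ∑ j, C j, fun z => ?_⟩
    calc (1 + ∑ j, ‖z j‖ ^ 2) ^ (m + 1) * ‖heatExtension a g z‖ ^ 2
        = (1 + ∑ j, ‖z j‖ ^ 2) ^ m * ‖heatExtension a g z‖ ^ 2 +
          ∑ j, (1 + ∑ i, ‖z i‖ ^ 2) ^ m * ‖heatExtension a (coordOperator a j g) z‖ ^ 2 := by
          simp_rw [heatExtension_coordOperator ha, norm_smul, mul_pow, ← Finset.mul_sum,
            ← Finset.sum_mul]
          ring
      _ ≤ _ := by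
          rw [add_mul, Finset.sum_mul]
          exact add_le_add (hC₀ z) (Finset.sum_le_sum fun j _ => hC j z)

end Schwartz

theorem bargmann_estimate_general {ι E : Type*} [Fintype ι] [NormedAddCommGroup E]
    [NormedSpace ℂ E] [CompleteSpace E] {a : ℝ} (ha : 0 < a) (g : 𝓢(ι → ℝ, E)) :
    ∃ F : (ι → ℂ) → E, Differentiable ℂ F ∧
      (∀ z : ι → ℂ, F z = ∫ u : ι → ℝ,
        ((((4 * π * a) ^ (-(Fintype.card ι : ℝ) / 2) : ℝ) : ℂ) *
          Complex.exp (-(∑ j, (z j - (u j : ℂ)) ^ 2) / (4 * (a : ℂ)))) • g u) ∧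
      ∀ m : ℕ, ∃ Cm : ℝ, ∀ x y : ι → ℝ,
        ‖F (fun j => (x j : ℂ) + (y j : ℂ) * Complex.I)‖ ^ 2 ≤
          Cm * (1 + ∑ j, x j ^ 2 + ∑ j, y j ^ 2) ^ (-(m : ℝ)) *
            ((8 * π * a) ^ (-(Fintype.card ι : ℝ) / 2) *
              Real.exp ((∑ j, y j ^ 2) / (2 * a))) := by
  refine ⟨heatExtension a g, differentiable_heatExtension ha g.integrable, fun z => rfl,
    fun m => ?_⟩
  obtain ⟨C, hC⟩ := exists_pow_mul_norm_heatExtension_sq_le ha m g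
  refine ⟨C, fun x y => ?_⟩
  have hpos : 0 < 1 + ∑ j, x j ^ 2 + ∑ j, y j ^ 2 := by positivity
  have h := hC fun j => x j + y j * Complex.I
  simp only [Complex.sq_norm, Complex.normSq_add_mul_I, Finset.sum_add_distrib, ← add_assoc,
    Complex.add_im, Complex.ofReal_im, Complex.im_ofReal_mul, Complex.I_im, mul_one, zero_add] at h
  rw [Real.rpow_neg hpos.le, Real.rpow_natCast, mul_right_comm, ← div_eq_mul_inv,
    le_div_iff₀' (by positivity)]
  exact h

/-- Bargmann's pointwise estimate: if `g` is Schwartz on ℝⁿ and `f = g * p_a` (`a > 0`),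
then `f` extends to an entire function `F` on ℂⁿ and for every `m` there is `C_m` with
`|F(x+iy)|² ≤ C_m (1+|x|²+|y|²)^{-m} (8πa)^{-n/2} e^{|y|²/(2a)}`. -/
theorem bargmann_estimate (n : ℕ) (a : ℝ) (ha : 0 < a)
    (g : SchwartzMap (Fin n → ℝ) ℂ) :
    ∃ F : (Fin n → ℂ) → ℂ, Differentiable ℂ F ∧
      (∀ z : Fin n → ℂ, F z = ∫ u : Fin n → ℝ, g u *
        (((4 * π * a) ^ (-(n : ℝ) / 2) : ℝ) : ℂ) *
          Complex.exp (-(∑ j, (z j - (u j : ℂ)) ^ 2) / (4 * (a : ℂ)))) ∧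
      ∀ m : ℕ, ∃ Cm : ℝ, ∀ x y : Fin n → ℝ,
        ‖F (fun j => (x j : ℂ) + (y j : ℂ) * Complex.I)‖ ^ 2 ≤
          Cm * (1 + ∑ j, x j ^ 2 + ∑ j, y j ^ 2) ^ (-(m : ℝ)) *
            ((8 * π * a) ^ (-(n : ℝ) / 2) * Real.exp ((∑ j, y j ^ 2) / (2 * a))) := by
  simpa only [Fintype.card_fin, smul_eq_mul, mul_comm (g _), mul_right_comm _ (g _)] using
    bargmann_estimate_general ha g
end
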